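/- On ℝ^n with n ≥ 2, let 𝒜 := σ(s) be the σ-algebra of preimages under the sum map s(x₁,…,xₙ) = x₁ + ⋯ + xₙ of Borel subsets of ℝ. Then for every proper subset M ⊊ {1,…,n}, the reduced σ-algebra { A ⊆ ℝ^M : A × ℝ^{{1,…,n}∖M} ∈ 𝒜 } is the trivial σ-algebra {∅, ℝ^M}, where A × ℝ^{{1,…,n}∖M} denotes the preimage of A under the canonical projection ℝ^n → ℝ^M. -/

import Mathlib

/-- The canonical projection `ℝ^n → ℝ^M` discarding the coordinates outside `M`. -/
def projFull {n : ℕ} (M : Finset (Fin n))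
    (x : Fin n → ℝ) (i : {j : Fin n // j ∈ M}) : ℝ :=
  x i.1

theorem map_comap_eq_bot_of_forall_exists_eq {X Y Z : Type*} [m : MeasurableSpace Z]
    {p : X → Y} {s : X → Z}
    (h : ∀ y y', ∃ x x', p x = y ∧ p x' = y' ∧ s x = s x') :
    MeasurableSpace.map p (MeasurableSpace.comap s m) = ⊥ := by
  refine eq_bot_iff.2 ?_
  rintro A ⟨B, -, hB⟩
  have mem_iff (x : X) : s x ∈ B ↔ p x ∈ A := Set.ext_iff.1 hB x
  have mem_of_mem (y y' : Y) (hy : y ∈ A) : y' ∈ A := by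
    obtain ⟨x, x', rfl, rfl, hs⟩ := h y y'
    exact (mem_iff x').1 (hs ▸ (mem_iff x).2 hy)
  rw [MeasurableSpace.measurableSet_bot_iff]
  obtain rfl | ⟨y, hy⟩ := A.eq_empty_or_nonempty
  · exact .inl rfl
  · exact .inr (Set.eq_univ_of_forall fun y' => mem_of_mem y y' hy)

section Sum

variable {ι G : Type*} [Fintype ι] [AddCommMonoid G]

theorem exists_restrict_eq_and_sum_eq_add {M : Finset ι} {k : ι} (hk : k ∉ M)
    (y : M → G) (a : G) :
    ∃ x : ι → G, M.restrict x = y ∧ ∑ i, x i = ∑ i, y i + a := by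
  classical
  let z : ι → G := Function.extend Subtype.val y 0
  have z_apply (i : M) : z i = y i := Subtype.val_injective.extend_apply y 0 i
  have sum_z : ∑ i, z i = ∑ i, y i :=
    (Fintype.sum_of_injective Subtype.val Subtype.val_injective y z
      (fun i hi => Function.extend_apply' y (0 : ι → G) i hi) fun i => (z_apply i).symm).symm
  refine ⟨z + Pi.single k a, ?_, ?_⟩
  · funext i
    have hik : (i : ι) ≠ k := ne_of_mem_of_not_mem i.2 hk
    simp [z_apply, hik]
  · simp [Finset.sum_add_distrib, sum_z]

theorem redFam_of_sum_trivial_general [m : MeasurableSpace G]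
    (M : Finset ι) (hM : M ≠ Finset.univ) :
    MeasurableSpace.map (M.restrict (π := fun _ => G))
        (MeasurableSpace.comap (fun x : ι → G => ∑ i, x i) m)
      = ⊥ := by
  obtain ⟨k, hk⟩ : ∃ k, k ∉ M := by simpa [Finset.eq_univ_iff_forall] using hM
  -- Giving coordinate `k` of each point the total of the other equalizes the sums.
  refine map_comap_eq_bot_of_forall_exists_eq fun y y' => ?_
  obtain ⟨x, hx, sum_x⟩ := exists_restrict_eq_and_sum_eq_add hk y (∑ i, y' i)
  obtain ⟨x', hx', sum_x'⟩ := exists_restrict_eq_and_sum_eq_add hk y' (∑ i, y i)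
  exact ⟨x, x', hx, hx', by rw [sum_x, sum_x', add_comm]⟩

end Sum

/-- On `ℝ^n` with `n ≥ 2`, let `𝒜 := σ(s)` be the σ-algebra of preimages of Borel sets
under the sum map `s(x₁,…,xₙ) = x₁ + ⋯ + xₙ`. Then for every proper subset
`M ⊊ {1,…,n}`, the reduced σ-algebra `{ A ⊆ ℝ^M : (π^N_M)⁻¹(A) ∈ 𝒜 }` (the pushforward
`map` of `𝒜` under the canonical projection) is the trivial σ-algebra `{∅, ℝ^M} = ⊥`. -/
theorem redFam_of_sum_trivial {n : ℕ} (hn : 2 ≤ n)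
    (M : Finset (Fin n)) (hM : M ≠ Finset.univ) :
    MeasurableSpace.map (projFull M)
        (MeasurableSpace.comap (fun x : Fin n → ℝ => ∑ i, x i) Real.measurableSpace)
      = ⊥ :=
  redFam_of_sum_trivial_general M hM
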